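/- There are absolute constants ε₀ > 0 and c₀ > 0 such that for all sufficiently large n: if k ≤ ε₀·n, then π(G_tr^c) ≤ e^{−c₀·n} and μ(G_tr^c) ≤ e^{−c₀·n}. -/

import Mathlib

open Finset

noncomputable section

abbrev TState (n k : ℕ) := Fin n → (Fin k → ZMod 2)

/-- Spanning `n`-tuples of row vectors in `V = (ZMod 2)^k`. -/
def Stief (n k : ℕ) : Set (TState n k) :=
  {z | Submodule.span (ZMod 2) (Set.range z) = ⊤}

/-- `S_ξ(z) = Σ_i (−1)^{ξ(z_i)}`. -/
def Sxi {n k : ℕ} (ξ : Module.Dual (ZMod 2) (Fin k → ZMod 2)) (z : TState n k) : ℝ :=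
  ∑ i, (-1 : ℝ) ^ ((ξ (z i)).val)

/-- The balance condition defining the good set `G_tr`, as a subset of `V^n`. -/
def Gtr (n k : ℕ) : Set (TState n k) :=
  {z | ∀ ξ : Module.Dual (ZMod 2) (Fin k → ZMod 2), ξ ≠ 0 → |Sxi ξ z| ≤ (n : ℝ) / 4}

/-!
The signs `(-1) ^ ξ(z_i)` of a uniform `z` are independent and, for `ξ ≠ 0`, unbiased, so
Hoeffding's inequality bounds the proportion of `z` with `|S_ξ(z)| > n / 4` by `2 e ^ (-n / 32)`.
A union bound over the `2 ^ k` functionals costs only a factor `e ^ k`, which is absorbed when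
`k ≤ n / 128`. If the `z_i` do not span, some `ξ ≠ 0` kills all of them and `S_ξ(z) = n`; hence
`G_tr` lies inside `Stief(n, k)`, and conditioning `μ` on a set containing `G_tr` can only
decrease the mass of `G_tr^c`.
-/

section Counting

variable {α ι : Type*}

lemma ncard_iUnion_le_card_mul [Finite ι] {s : ι → Set α} {b : ℝ}
    (hs : ∀ i, ((s i).ncard : ℝ) ≤ b) : ((⋃ i, s i).ncard : ℝ) ≤ Nat.card ι * b := by
  have := Fintype.ofFinite ι
  calc ((⋃ i, s i).ncard : ℝ) ≤ ∑ i, ((s i).ncard : ℝ) := by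
        exact_mod_cast Set.ncard_iUnion_le_of_fintype s
    _ ≤ Nat.card ι * b := by
        simpa [Nat.card_eq_fintype_card] using Finset.sum_le_card_nsmul univ _ b fun i _ ↦ hs i

lemma ncard_inter_compl_div_ncard_le [Finite α] {s t : Set α} (hts : t ⊆ s) :
    ((s ∩ tᶜ).ncard : ℝ) / s.ncard ≤ (tᶜ.ncard : ℝ) / Nat.card α := by
  rcases s.eq_empty_or_nonempty with rfl | hs
  · simpa using by positivity
  have hs_pos : (0 : ℝ) < s.ncard := by exact_mod_cast hs.ncard_pos
  have hs_le : (s.ncard : ℝ) ≤ Nat.card α := by exact_mod_cast Set.ncard_le_card s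
  have h_inter : ((s ∩ tᶜ).ncard : ℝ) = s.ncard - t.ncard := by
    rw [← Set.sdiff_eq, eq_sub_iff_add_eq]
    exact_mod_cast Set.ncard_sdiff_add_ncard_of_subset hts
  have h_compl : (tᶜ.ncard : ℝ) = Nat.card α - t.ncard := by
    rw [eq_sub_iff_add_eq']
    exact_mod_cast Set.ncard_add_ncard_compl t
  rw [h_inter, h_compl, sub_div, sub_div, div_self hs_pos.ne', div_self (hs_pos.trans_le hs_le).ne']
  gcongr

end Counting

section Hoeffding

open Real

variable {α ι : Type*} [Fintype α] [Fintype ι] [DecidableEq ι]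

lemma ncard_lt_abs_mul_exp_le (X : α → ℝ) {l : ℝ} (hl : 0 ≤ l) (a : ℝ) :
    ({x | a < |X x|}.ncard : ℝ) * exp (l * a) ≤ ∑ x, exp (l * X x) + ∑ x, exp (-l * X x) := by
  classical
  rw [Set.ncard_eq_toFinset_card', ← nsmul_eq_mul, ← sum_add_distrib]
  calc #{x | a < |X x|}.toFinset • exp (l * a)
      ≤ ∑ x ∈ {x | a < |X x|}.toFinset, (exp (l * X x) + exp (-l * X x)) := by
        refine card_nsmul_le_sum _ _ _ fun x hx ↦ ?_
        have ha : a < |X x| := by simpa using hx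
        calc exp (l * a) ≤ exp |l * X x| := by rw [abs_mul, abs_of_nonneg hl]; gcongr
          _ ≤ exp (l * X x) + exp (-l * X x) := by simpa using exp_abs_le (l * X x)
    _ ≤ ∑ x, (exp (l * X x) + exp (-l * X x)) :=
        sum_le_univ_sum_of_nonneg fun x ↦ by positivity

lemma sum_exp_mul_sum_eq_pow (X : α → ℝ) (l : ℝ) :
    ∑ z : ι → α, exp (l * ∑ i, X (z i)) = (∑ x, exp (l * X x)) ^ Fintype.card ι := by
  simp only [mul_sum, exp_sum]
  rw [← Fintype.prod_sum fun (_ : ι) x ↦ exp (l * X x), prod_const, card_univ]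

theorem ncard_lt_abs_sum_le_of_subgaussian {X : α → ℝ}
    (hX : ∀ l, ∑ x, exp (l * X x) ≤ Fintype.card α * exp (l ^ 2 / 2)) {a : ℝ} (ha : 0 ≤ a) :
    ({z : ι → α | a < |∑ i, X (z i)|}.ncard : ℝ) ≤
      2 * exp (-(a ^ 2 / (2 * Fintype.card ι))) * Fintype.card (ι → α) := by
  set n : ℝ := (Fintype.card ι : ℝ)
  -- The minimiser of the Chernoff exponent `n * l ^ 2 / 2 - l * a`.
  set l : ℝ := a / n with hl
  have mgf_le (t : ℝ) (ht : t ^ 2 = l ^ 2) :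
      ∑ z : ι → α, exp (t * ∑ i, X (z i)) ≤ Fintype.card (ι → α) * exp (n * (l ^ 2 / 2)) := by
    calc ∑ z : ι → α, exp (t * ∑ i, X (z i))
        ≤ (Fintype.card α * exp (t ^ 2 / 2)) ^ Fintype.card ι := by
          rw [sum_exp_mul_sum_eq_pow]
          gcongr
          exact hX t
      _ = Fintype.card (ι → α) * exp (n * (l ^ 2 / 2)) := by
          rw [mul_pow, ← exp_nat_mul, ht, Fintype.card_fun, Nat.cast_pow]
  have exponent_eq : n * (l ^ 2 / 2) = -(a ^ 2 / (2 * n)) + l * a := by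
    rcases eq_or_ne n 0 with h0 | h0
    · simp [hl, h0]
    · rw [hl]; field_simp; ring
  refine le_of_mul_le_mul_right ?_ (exp_pos (l * a))
  calc ({z : ι → α | a < |∑ i, X (z i)|}.ncard : ℝ) * exp (l * a)
      ≤ ∑ z : ι → α, exp (l * ∑ i, X (z i)) + ∑ z : ι → α, exp (-l * ∑ i, X (z i)) :=
        ncard_lt_abs_mul_exp_le (fun z : ι → α ↦ ∑ i, X (z i)) (by positivity) a
    _ ≤ Fintype.card (ι → α) * exp (n * (l ^ 2 / 2)) +
          Fintype.card (ι → α) * exp (n * (l ^ 2 / 2)) :=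
        add_le_add (mgf_le l rfl) (mgf_le (-l) (neg_sq l))
    _ = 2 * exp (-(a ^ 2 / (2 * n))) * Fintype.card (ι → α) * exp (l * a) := by
        rw [exponent_eq, exp_add]; ring

end Hoeffding

section SignCharacters

lemma card_nsmul_sum_comp_of_surjective {G H M : Type*} [AddGroup G] [AddGroup H] [Fintype G]
    [Fintype H] [AddCommMonoid M] (f : G →+ H) (hf : Function.Surjective f) (g : H → M) :
    Fintype.card H • ∑ x, g (f x) = Fintype.card G • ∑ y, g y := by
  have sum_translate (y : H) : ∑ x, g (f x) = ∑ x, g (f x + y) := by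
    obtain ⟨x₀, rfl⟩ := hf y
    simpa only [Equiv.coe_addRight, map_add] using
      (Equiv.sum_comp (Equiv.addRight x₀) fun x ↦ g (f x)).symm
  calc Fintype.card H • ∑ x, g (f x) = ∑ y, ∑ x, g (f x + y) := by
        rw [← Fintype.sum_congr _ _ sum_translate, sum_const, card_univ]
    _ = ∑ x : G, ∑ y, g y := by
        rw [sum_comm]
        exact Fintype.sum_congr _ _ fun x ↦ Equiv.sum_comp (Equiv.addLeft (f x)) g
    _ = Fintype.card G • ∑ y, g y := by rw [sum_const, card_univ]

lemma card_dual (K V : Type*) [Field K] [AddCommGroup V] [Module K V] [Module.Finite K V] :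
    Nat.card (Module.Dual K V) = Nat.card V := by
  rw [Module.natCard_eq_pow_finrank (K := K), Subspace.dual_finrank_eq,
    ← Module.natCard_eq_pow_finrank (K := K)]

lemma sum_exp_mul_neg_one_pow_dual {V : Type*} [AddCommGroup V] [Module (ZMod 2) V] [Fintype V]
    {ξ : Module.Dual (ZMod 2) V} (hξ : ξ ≠ 0) (l : ℝ) :
    ∑ v, Real.exp (l * (-1) ^ (ξ v).val) = Fintype.card V * Real.cosh l := by
  have equidistributed := card_nsmul_sum_comp_of_surjective ξ.toAddMonoidHom
    (LinearMap.surjective hξ) fun b ↦ Real.exp (l * (-1) ^ b.val)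
  have sum_bits : ∑ b : ZMod 2, Real.exp (l * (-1) ^ b.val) = 2 * Real.cosh l := by
    rw [Real.cosh_eq, mul_div_cancel₀ _ two_ne_zero]
    refine (Fin.sum_univ_two _).trans ?_
    simp [ZMod.val]
  simp only [sum_bits, ZMod.card, nsmul_eq_mul, LinearMap.toAddMonoidHom_coe] at equidistributed
  push_cast at equidistributed
  linarith

end SignCharacters

section BalancedTuples

variable {n k : ℕ}

lemma Gtr_subset_Stief (hn : 0 < n) : Gtr n k ⊆ Stief n k := by
  intro z hz
  by_contra hspan
  obtain ⟨ξ, hξ, hker⟩ := Submodule.exists_le_ker_of_lt_top _ (lt_top_iff_ne_top.2 hspan)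
  have hvanish (i : Fin n) : ξ (z i) = 0 := hker (Submodule.subset_span ⟨i, rfl⟩)
  have hSxi : Sxi ξ z = n := by simp [Sxi, hvanish]
  have hbal : (n : ℝ) ≤ n / 4 := by simpa [hSxi] using hz ξ hξ
  have hn' : (0 : ℝ) < n := by exact_mod_cast hn
  linarith

lemma ncard_lt_abs_Sxi_le {ξ : Module.Dual (ZMod 2) (Fin k → ZMod 2)} (hξ : ξ ≠ 0) {a : ℝ}
    (ha : 0 ≤ a) :
    ({z : TState n k | a < |Sxi ξ z|}.ncard : ℝ) ≤
      2 * Real.exp (-(a ^ 2 / (2 * n))) * Fintype.card (TState n k) := by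
  have subgaussian (l : ℝ) : ∑ v, Real.exp (l * (-1) ^ (ξ v).val) ≤
      Fintype.card (Fin k → ZMod 2) * Real.exp (l ^ 2 / 2) := by
    rw [sum_exp_mul_neg_one_pow_dual hξ]
    gcongr
    exact Real.cosh_le_exp_half_sq l
  simpa only [Sxi, Fintype.card_fin] using
    ncard_lt_abs_sum_le_of_subgaussian (ι := Fin n) subgaussian ha

lemma compl_Gtr_eq_iUnion : (Gtr n k)ᶜ =
    ⋃ ξ : {ξ : Module.Dual (ZMod 2) (Fin k → ZMod 2) // ξ ≠ 0},
      {z | (n : ℝ) / 4 < |Sxi ξ.1 z|} := by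
  ext z
  simp [Gtr]

theorem ncard_compl_Gtr_le : ((Gtr n k)ᶜ.ncard : ℝ) ≤
    2 ^ (k + 1) * Real.exp (-(n / 32)) * Fintype.card (TState n k) := by
  have : Finite (Module.Dual (ZMod 2) (Fin k → ZMod 2)) := Module.finite_of_finite (ZMod 2)
  have tail_le (ξ : {ξ : Module.Dual (ZMod 2) (Fin k → ZMod 2) // ξ ≠ 0}) :
      ({z : TState n k | (n : ℝ) / 4 < |Sxi ξ.1 z|}.ncard : ℝ) ≤
        2 * Real.exp (-(n / 32)) * Fintype.card (TState n k) := by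
    have exponent_eq : ((n : ℝ) / 4) ^ 2 / (2 * n) = n / 32 := by
      rcases eq_or_ne (n : ℝ) 0 with h0 | h0
      · simp [h0]
      · field_simp; norm_num
    simpa only [exponent_eq] using ncard_lt_abs_Sxi_le (n := n) ξ.2 (a := n / 4) (by positivity)
  have card_le : (Nat.card {ξ : Module.Dual (ZMod 2) (Fin k → ZMod 2) // ξ ≠ 0} : ℝ) ≤ 2 ^ k := by
    have h := Finite.card_subtype_le fun ξ : Module.Dual (ZMod 2) (Fin k → ZMod 2) ↦ ξ ≠ 0
    rw [card_dual] at h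
    exact_mod_cast h.trans_eq (by simp)
  calc ((Gtr n k)ᶜ.ncard : ℝ)
      ≤ Nat.card {ξ : Module.Dual (ZMod 2) (Fin k → ZMod 2) // ξ ≠ 0} *
          (2 * Real.exp (-(n / 32)) * Fintype.card (TState n k)) := by
        rw [compl_Gtr_eq_iUnion]
        exact ncard_iUnion_le_card_mul tail_le
    _ ≤ 2 ^ k * (2 * Real.exp (-(n / 32)) * Fintype.card (TState n k)) := by gcongr
    _ = 2 ^ (k + 1) * Real.exp (-(n / 32)) * Fintype.card (TState n k) := by ring

end BalancedTuples

lemma two_pow_le_exp (m : ℕ) : (2 : ℝ) ^ m ≤ Real.exp m := by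
  rw [← Real.exp_one_pow]
  gcongr
  linarith [Real.add_one_le_exp (1 : ℝ)]

theorem stmt8 :
    ∃ ε₀ : ℝ, 0 < ε₀ ∧ ∃ c₀ : ℝ, 0 < c₀ ∧ ∃ N : ℕ, ∀ n : ℕ, N ≤ n →
      ∀ k : ℕ, 1 ≤ k → k ≤ n → (k : ℝ) ≤ ε₀ * n →
        -- π(G_tr^c) ≤ e^{−c₀ n}, where π is uniform on Stief(n,k)
        (Nat.card ↥(Stief n k ∩ (Gtr n k)ᶜ) : ℝ) / (Nat.card ↥(Stief n k) : ℝ) ≤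
            Real.exp (-(c₀ * n)) ∧
        -- μ(G_tr^c) ≤ e^{−c₀ n}, where μ is uniform on V^n
        (Nat.card ↥((Gtr n k)ᶜ) : ℝ) / (Fintype.card (TState n k) : ℝ) ≤
            Real.exp (-(c₀ * n)) := by
  refine ⟨1 / 128, by norm_num, 1 / 128, by norm_num, 64, fun n hn k _ _ hk ↦ ?_⟩
  have hn' : (64 : ℝ) ≤ n := by exact_mod_cast hn
  have uniform_bound : ((Gtr n k)ᶜ.ncard : ℝ) / Fintype.card (TState n k) ≤
      Real.exp (-(1 / 128 * n)) := by
    refine (div_le_of_le_mul₀ (by positivity) (by positivity) ncard_compl_Gtr_le).trans ?_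
    calc 2 ^ (k + 1) * Real.exp (-(n / 32))
        ≤ Real.exp (k + 1 : ℕ) * Real.exp (-(n / 32)) := by gcongr; exact two_pow_le_exp _
      _ = Real.exp ((k + 1 : ℕ) + -(n / 32)) := (Real.exp_add _ _).symm
      _ ≤ Real.exp (-(1 / 128 * n)) := by gcongr; push_cast; linarith
  simp only [Nat.card_coe_set_eq]
  refine ⟨?_, uniform_bound⟩
  rw [← Nat.card_eq_fintype_card] at uniform_bound
  exact (ncard_inter_compl_div_ncard_le (Gtr_subset_Stief (by lia))).trans uniform_bound
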